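/- Given a set S of n points in the plane (n even), one can always find two orthogonal lines ℓ₁, ℓ₂ and a partition S = S₁ ∪ S₂ ∪ S₃ ∪ S₄ with |S₁| = |S₃| = ⌊n/4⌋ and |S₂| = |S₄| = ⌈n/4⌉ such that S₁ and S₃ belong to two opposite closed quadrants determined by ℓ₁ and ℓ₂, and S₂ and S₄ belong to the other two opposite closed quadrants. -/

import Mathlib

/-!
For a unit vector `u`, split `S` in half by a line orthogonal to `u` and by a line parallel to `u`,
and count the points lying on the lower side of both. Ties make the halves, hence the count,
multivalued; but tied points may be exchanged one at a time, so the counts possible for a given `u`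
fill an interval of integers, and the counts possible near `u` are already possible at `u`. A
correspondence of this kind on a connected space obeys an intermediate value theorem. Rotating `u`
by `π/2` turns a count `j` into `m - j`, where `m = |S| / 2`, so the count `⌊m / 2⌋` is attained
for some `u`, and the two lines there are the required ones.
-/

open EuclideanGeometry Real RealInnerProductSpace

noncomputable section

abbrev Plane := EuclideanSpace ℝ (Fin 2)

/-- The rotation of a vector of the plane by `π/2`. -/
noncomputable def rot90 (u : Plane) : Plane :=
  (WithLp.equiv 2 (Fin 2 → ℝ)).symm ![-(u 1), u 0]

theorem ordConnected_iUnion_of_upperHemicontinuous {X Y : Type*} [TopologicalSpace X]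
    [PreconnectedSpace X] [LinearOrder Y] [TopologicalSpace Y] [OrderClosedTopology Y]
    {F : X → Set Y} (hF : UpperHemicontinuous F) (hne : ∀ x, (F x).Nonempty)
    (hconn : ∀ x, (F x).OrdConnected) : (⋃ x, F x).OrdConnected := by
  have mem_iff (C : Set Y) (x : X) : x ∈ (F ⁻¹' Set.Iic Cᶜ)ᶜ ↔ (F x ∩ C).Nonempty := by
    simp [Set.not_subset, Set.Nonempty]
  have isClosed_meets := upperHemicontinuous_iff_isClosed_compl_preimage_Iic_compl.1 hF
  refine ⟨fun a ha b hb y hy => ?_⟩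
  obtain ⟨xa, hxa⟩ := Set.mem_iUnion.1 ha
  obtain ⟨xb, hxb⟩ := Set.mem_iUnion.1 hb
  obtain ⟨x, -, hlow, hhigh⟩ := isPreconnected_closed_iff.1 isPreconnected_univ _ _
    (isClosed_meets (Set.Iic y) isClosed_Iic) (isClosed_meets (Set.Ici y) isClosed_Ici)
    (fun x _ => by
      obtain ⟨z, hz⟩ := hne x
      exact (le_total z y).imp (fun h => (mem_iff _ x).2 ⟨z, hz, h⟩)
        (fun h => (mem_iff _ x).2 ⟨z, hz, h⟩))
    ⟨xa, trivial, (mem_iff _ xa).2 ⟨a, hxa, hy.1⟩⟩ ⟨xb, trivial, (mem_iff _ xb).2 ⟨b, hxb, hy.2⟩⟩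
  obtain ⟨c, hc, hcy⟩ := (mem_iff _ x).1 hlow
  obtain ⟨d, hd, hyd⟩ := (mem_iff _ x).1 hhigh
  exact Set.mem_iUnion.2 ⟨x, (hconn x).out hc hd ⟨hcy, hyd⟩⟩

section LowerParts

open scoped Finset Topology

variable {α β : Type*}

/-- `L` consists of `m` elements of `S` at which `f` takes its `m` smallest values on `S`. Ties may
be broken arbitrarily, so `L` is in general not determined by `S`, `m` and `f`. -/
structure IsLowerPart [LE β] (S : Finset α) (m : ℕ) (f : α → β) (L : Finset α) : Prop where
  subset : L ⊆ S
  card_eq : #L = m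
  le : ∀ p ∈ L, ∀ q ∈ S, q ∉ L → f p ≤ f q

/-- The possible numbers of common elements of a set of `m` lowest points of `S` for `f` and a set
of `m'` lowest points of `S` for `g`, over all ways of breaking ties. -/
def overlapCards [LE β] [DecidableEq α] (S : Finset α) (m m' : ℕ) (f g : α → β) : Set ℕ :=
  {k | ∃ L B, IsLowerPart S m f L ∧ IsLowerPart S m' g B ∧ #(L ∩ B) = k}

theorem exists_isLowerPart [LinearOrder β] {S : Finset α} {m : ℕ} (f : α → β) (hm : m ≤ #S) :
    ∃ L, IsLowerPart S m f L := by
  classical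
  induction m with
  | zero => exact ⟨∅, S.empty_subset, rfl, by simp⟩
  | succ m ih =>
    obtain ⟨L, hL⟩ := ih (by lia)
    have hne : (S \ L).Nonempty := by
      rw [← Finset.card_pos, Finset.card_sdiff_of_subset hL.subset, hL.card_eq]
      lia
    obtain ⟨a, ha, hmin⟩ := Finset.exists_min_image (S \ L) f hne
    rw [Finset.mem_sdiff] at ha
    refine ⟨insert a L, Finset.insert_subset ha.1 hL.subset, ?_, fun p hp q hq hqL => ?_⟩
    · rw [Finset.card_insert_of_notMem ha.2, hL.card_eq]
    · rw [Finset.mem_insert, not_or] at hqL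
      rcases Finset.mem_insert.1 hp with rfl | hp
      · exact hmin q (Finset.mem_sdiff.2 ⟨hq, hqL.2⟩)
      · exact hL.le p hp q hq hqL.2

theorem card_sdiff_union_eq_card_inter [DecidableEq α] {S L B : Finset α} (hL : L ⊆ S)
    (hB : B ⊆ S) (hcard : #S = #L + #B) : #(S \ (L ∪ B)) = #(L ∩ B) := by
  have hunion := Finset.card_union_add_card_inter L B
  rw [Finset.card_sdiff_of_subset (Finset.union_subset hL hB)]
  lia

theorem exists_between_card_inter_eq [DecidableEq α] {L L' B : Finset α} {k : ℕ}
    (hcard : #L = #L') (hk : #(L ∩ B) ≤ k) (hk' : k ≤ #(L' ∩ B)) :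
    ∃ M, L ∩ L' ⊆ M ∧ M ⊆ L ∪ L' ∧ #M = #L ∧ #(M ∩ B) = k := by
  have hL := Finset.card_sdiff_add_card_inter L B
  have hL' := Finset.card_sdiff_add_card_inter L' B
  obtain ⟨I, hI, hI', hIcard⟩ := Finset.exists_subsuperset_card_eq
    (show L ∩ L' ∩ B ⊆ (L ∪ L') ∩ B by grind)
    ((Finset.card_le_card (show L ∩ L' ∩ B ⊆ L ∩ B by grind)).trans hk)
    (hk'.trans (Finset.card_le_card (by grind)))
  obtain ⟨O, hO, hO', hOcard⟩ := Finset.exists_subsuperset_card_eq (n := #L - k)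
    (show (L ∩ L') \ B ⊆ (L ∪ L') \ B by grind)
    ((Finset.card_le_card (show (L ∩ L') \ B ⊆ L' \ B by grind)).trans (by lia))
    ((show #L - k ≤ #(L \ B) by lia).trans (Finset.card_le_card (by grind)))
  have hdisj : Disjoint I O := by
    rw [Finset.disjoint_left]
    grind
  refine ⟨I ∪ O, by grind, by grind, ?_, ?_⟩
  · rw [Finset.card_union_of_disjoint hdisj]
    lia
  · rw [show (I ∪ O) ∩ B = I by grind, hIcard]

namespace IsLowerPart

theorem exists_threshold [LinearOrder β] [Nonempty β] {S L : Finset α} {m : ℕ} {f : α → β}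
    (hL : IsLowerPart S m f L) : ∃ c, (∀ p ∈ L, f p ≤ c) ∧ ∀ q ∈ S, q ∉ L → c ≤ f q := by
  classical
  rcases L.eq_empty_or_nonempty with rfl | hne
  · obtain ⟨c, hc⟩ := (S.image f).bddBelow
    exact ⟨c, by simp, fun q hq _ => hc (Finset.mem_coe.2 (Finset.mem_image_of_mem f hq))⟩
  · obtain ⟨a, ha, hmax⟩ := Finset.exists_max_image L f hne
    exact ⟨f a, hmax, hL.le a ha⟩

theorem sdiff_neg [AddCommGroup β] [PartialOrder β] [IsOrderedAddMonoid β] [DecidableEq α]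
    {S L : Finset α} {m : ℕ} {f : α → β} (hL : IsLowerPart S m f L) :
    IsLowerPart S (#S - m) (-f) (S \ L) where
  subset := Finset.sdiff_subset
  card_eq := by rw [Finset.card_sdiff_of_subset hL.subset, hL.card_eq]
  le p hp q hq hqL := by
    rw [Finset.mem_sdiff] at hp hqL
    exact neg_le_neg (hL.le q (by tauto) p hp.1 hp.2)

theorem of_between [LinearOrder β] [DecidableEq α] {S L L' M : Finset α} {m : ℕ} {f : α → β}
    (hL : IsLowerPart S m f L) (hL' : IsLowerPart S m f L') (hM : L ∩ L' ⊆ M) (hM' : M ⊆ L ∪ L')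
    (hcard : #M = m) : IsLowerPart S m f M where
  subset := hM'.trans (Finset.union_subset hL.subset hL'.subset)
  card_eq := hcard
  le p hp q hq hqM := by
    have tied {a b : α} (ha : a ∈ L \ L') (hb : b ∈ L' \ L) : f a = f b := by
      rw [Finset.mem_sdiff] at ha hb
      exact le_antisymm (hL.le a ha.1 b (hL'.subset hb.1) hb.2)
        (hL'.le b hb.1 a (hL.subset ha.1) ha.2)
    have hsdiff : #(L \ L') = #(L' \ L) :=
      Finset.card_sdiff_comm (hL.card_eq.trans hL'.card_eq.symm)
    by_cases hpq : p ∈ L ∧ q ∉ L ∨ p ∈ L' ∧ q ∉ L'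
    · exact hpq.elim (fun h => hL.le p h.1 q hq h.2) (fun h => hL'.le p h.1 q hq h.2)
    · -- Now `p` and `q` lie in the same one of `L \ L'`, `L' \ L`, and are tied via the other.
      have hsame : p ∈ L \ L' ∧ q ∈ L \ L' ∨ p ∈ L' \ L ∧ q ∈ L' \ L := by grind
      rcases hsame with ⟨hp, hq⟩ | ⟨hp, hq⟩
      · obtain ⟨b, hb⟩ := Finset.card_pos.1 (hsdiff ▸ Finset.card_pos.2 ⟨p, hp⟩)
        exact ((tied hp hb).trans (tied hq hb).symm).le
      · obtain ⟨a, ha⟩ := Finset.card_pos.1 (hsdiff.symm ▸ Finset.card_pos.2 ⟨p, hp⟩)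
        exact ((tied ha hp).symm.trans (tied ha hq)).le

theorem exists_card_inter_eq [LinearOrder β] [DecidableEq α] {S L L' B : Finset α} {m k : ℕ}
    {f : α → β} (hL : IsLowerPart S m f L) (hL' : IsLowerPart S m f L') (hk : #(L ∩ B) ≤ k)
    (hk' : k ≤ #(L' ∩ B)) : ∃ M, IsLowerPart S m f M ∧ #(M ∩ B) = k := by
  obtain ⟨M, hM, hM', hcard, hMB⟩ :=
    exists_between_card_inter_eq (hL.card_eq.trans hL'.card_eq.symm) hk hk'
  exact ⟨M, hL.of_between hL' hM hM' (hcard.trans hL.card_eq), hMB⟩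

theorem eventually_of_nearby [LinearOrder β] [TopologicalSpace β] [OrderClosedTopology β]
    {X : Type*} [TopologicalSpace X] {f : X → α → β} {x : X}
    (hf : ∀ p, ContinuousAt (fun x => f x p) x) (S : Finset α) (m : ℕ) :
    ∀ᶠ x' in 𝓝 x, ∀ L, IsLowerPart S m (f x') L → IsLowerPart S m (f x) L := by
  have lt_persists : ∀ᶠ x' in 𝓝 x, ∀ q ∈ S, ∀ p ∈ S, f x q < f x p → f x' q < f x' p := by
    simp only [Filter.eventually_all_finset, Filter.eventually_imp_distrib_left]
    exact fun q _ p _ => (hf q).eventually_lt (hf p)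
  filter_upwards [lt_persists] with x' hlt L hL
  exact ⟨hL.subset, hL.card_eq, fun p hp q hq hqL =>
    le_of_not_gt fun h => (hL.le p hp q hq hqL).not_gt (hlt q hq p (hL.subset hp) h)⟩

end IsLowerPart

section OverlapCards

variable [DecidableEq α] {S : Finset α} {m m' : ℕ}

theorem overlapCards_nonempty [LinearOrder β] (f g : α → β) (hm : m ≤ #S) (hm' : m' ≤ #S) :
    (overlapCards S m m' f g).Nonempty := by
  obtain ⟨L, hL⟩ := exists_isLowerPart f hm
  obtain ⟨B, hB⟩ := exists_isLowerPart g hm'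
  exact ⟨_, L, B, hL, hB, rfl⟩

theorem ordConnected_overlapCards [LinearOrder β] (f g : α → β) :
    (overlapCards S m m' f g).OrdConnected := by
  refine ⟨?_⟩
  rintro _ ⟨L, B, hL, hB, rfl⟩ _ ⟨L', B', hL', hB', rfl⟩ k ⟨hk, hk'⟩
  -- Deform `(L, B)` to `(L', B)` and then to `(L', B')`; `k` is met in one of the two stages.
  rcases le_total k #(L' ∩ B) with h | h
  · obtain ⟨M, hM, hMB⟩ := hL.exists_card_inter_eq hL' hk h
    exact ⟨M, B, hM, hB, hMB⟩
  · rw [Finset.inter_comm] at h hk'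
    obtain ⟨M, hM, hML'⟩ := hB.exists_card_inter_eq hB' h hk'
    exact ⟨L', M, hL', hM, by rwa [Finset.inter_comm]⟩

theorem upperHemicontinuous_overlapCards [LinearOrder β] [TopologicalSpace β]
    [OrderClosedTopology β] {X : Type*} [TopologicalSpace X] {f g : X → α → β}
    (hf : ∀ p, Continuous fun x => f x p) (hg : ∀ p, Continuous fun x => g x p) :
    UpperHemicontinuous fun x => overlapCards S m m' (f x) (g x) := by
  refine .of_forall_isOpen fun x U _ hU => ?_
  filter_upwards [IsLowerPart.eventually_of_nearby (fun p => (hf p).continuousAt) S m,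
    IsLowerPart.eventually_of_nearby (fun p => (hg p).continuousAt) S m'] with x' hfx hgx
  rintro _ ⟨L, B, hL, hB, rfl⟩
  exact hU ⟨L, B, hfx L hL, hgx B hB, rfl⟩

theorem sub_mem_overlapCards_neg [AddCommGroup β] [PartialOrder β] [IsOrderedAddMonoid β]
    {f g : α → β} {k : ℕ} (hk : k ∈ overlapCards S m m' f g) :
    m' - k ∈ overlapCards S m' (#S - m) g (-f) := by
  obtain ⟨L, B, hL, hB, rfl⟩ := hk
  refine ⟨B, S \ L, hB, hL.sdiff_neg, ?_⟩
  rw [← Finset.inter_sdiff_assoc, Finset.inter_eq_left.2 hB.subset, Finset.card_sdiff, hB.card_eq]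

end OverlapCards

end LowerParts

section Rotation

theorem rot90_rot90 (u : Plane) : rot90 (rot90 u) = -u := by
  ext i
  fin_cases i <;> simp [rot90]

theorem norm_rot90 (u : Plane) : ‖rot90 u‖ = ‖u‖ := by
  simp [EuclideanSpace.norm_eq, Fin.sum_univ_two, rot90, add_comm]

theorem inner_self_rot90 (u : Plane) : ⟪u, rot90 u⟫ = 0 := by
  simp [PiLp.inner_apply, Fin.sum_univ_two, rot90, mul_comm]

theorem inner_sub_smul_add_smul_rot90_left {u : Plane} (hu : ‖u‖ = 1) (p : Plane) (a b : ℝ) :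
    ⟪p - (a • u + b • rot90 u), u⟫ = ⟪p, u⟫ - a := by
  have horth : ⟪rot90 u, u⟫ = 0 := by rw [real_inner_comm, inner_self_rot90]
  simp [inner_sub_left, inner_add_left, inner_smul_left, horth, hu]

theorem inner_sub_smul_add_smul_rot90_right {u : Plane} (hu : ‖u‖ = 1) (p : Plane) (a b : ℝ) :
    ⟪p - (a • u + b • rot90 u), rot90 u⟫ = ⟪p, rot90 u⟫ - b := by
  simp [inner_sub_left, inner_add_left, inner_smul_left, inner_self_rot90, norm_rot90, hu]

theorem continuous_rot90 : Continuous rot90 :=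
  (PiLp.continuous_toLp 2 _).comp (by fun_prop)

end Rotation

theorem exists_half_mem_overlapCards_inner {S : Finset Plane} {m : ℕ} (hS : S.card = m + m) :
    ∃ u : Plane, ‖u‖ = 1 ∧ m / 2 ∈ overlapCards S m m (⟪·, u⟫) (⟪·, rot90 u⟫) := by
  let sphere := Metric.sphere (0 : Plane) 1
  let F (u : sphere) : Set ℕ := overlapCards S m m (⟪·, (u : Plane)⟫) (⟪·, rot90 u⟫)
  have : PreconnectedSpace sphere :=
    Subtype.preconnectedSpace (isPreconnected_sphere (by simp [← Module.finrank_eq_rank]) 0 1)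
  have hcont := continuous_rot90
  have hconn : (⋃ u, F u).OrdConnected := ordConnected_iUnion_of_upperHemicontinuous
    (upperHemicontinuous_overlapCards (fun p => by fun_prop) (fun p => by fun_prop))
    (fun u => overlapCards_nonempty _ _ (by lia) (by lia))
    (fun u => ordConnected_overlapCards _ _)
  let u : sphere := ⟨!₂[1, 0], by simp [sphere, EuclideanSpace.norm_eq]⟩
  let v : sphere := ⟨rot90 u, by simp [sphere, norm_rot90]⟩
  obtain ⟨k, hk⟩ : (F u).Nonempty := overlapCards_nonempty _ _ (by lia) (by lia)
  have hk' : m - k ∈ F v := by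
    convert sub_mem_overlapCards_neg hk using 1
    have hneg : (⟪·, rot90 v⟫) = -(⟪·, (u : Plane)⟫ : Plane → ℝ) := by
      ext p
      simp [v, rot90_rot90]
    simp only [F, hneg, hS, Nat.add_sub_cancel, v]
  have hmid : m / 2 ∈ Set.uIcc k (m - k) := by
    rw [Set.mem_uIcc]
    lia
  obtain ⟨w, hw⟩ := Set.mem_iUnion.1 <|
    hconn.uIcc_subset (Set.mem_iUnion.2 ⟨u, hk⟩) (Set.mem_iUnion.2 ⟨v, hk'⟩) hmid
  exact ⟨w, by simp, hw⟩

/-- **Equitable partition by two orthogonal lines**: for a set `S` of `n` points in the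
plane (`n` even) there are two orthogonal lines (described by their intersection point `c`,
a unit direction `u` and its rotation `rot90 u` by `π/2`) and a partition
`S = S₁ ∪ S₂ ∪ S₃ ∪ S₄` with `|S₁| = |S₃| = ⌊n/4⌋` and `|S₂| = |S₄| = ⌈n/4⌉` such that
`S₁, S₂, S₃, S₄` belong to the four closed quadrants determined by the two lines,
`S₁` and `S₃` in two opposite quadrants, `S₂` and `S₄` in the other two. -/
theorem equitable_partition_two_orthogonal_lines
    (n : ℕ) (hn : Even n) (S : Finset Plane) (hcard : S.card = n) :
    ∃ (c u : Plane), ‖u‖ = 1 ∧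
      ∃ S₁ S₂ S₃ S₄ : Finset Plane,
        (↑S : Set Plane) = ↑S₁ ∪ ↑S₂ ∪ ↑S₃ ∪ ↑S₄ ∧
        Disjoint S₁ S₂ ∧ Disjoint S₁ S₃ ∧ Disjoint S₁ S₄ ∧
        Disjoint S₂ S₃ ∧ Disjoint S₂ S₄ ∧ Disjoint S₃ S₄ ∧
        S₁.card = n / 4 ∧ S₃.card = n / 4 ∧
        S₂.card = (n + 3) / 4 ∧ S₄.card = (n + 3) / 4 ∧
        (∀ p ∈ S₁, 0 ≤ ⟪p - c, u⟫ ∧ 0 ≤ ⟪p - c, rot90 u⟫) ∧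
        (∀ p ∈ S₂, ⟪p - c, u⟫ ≤ 0 ∧ 0 ≤ ⟪p - c, rot90 u⟫) ∧
        (∀ p ∈ S₃, ⟪p - c, u⟫ ≤ 0 ∧ ⟪p - c, rot90 u⟫ ≤ 0) ∧
        (∀ p ∈ S₄, 0 ≤ ⟪p - c, u⟫ ∧ ⟪p - c, rot90 u⟫ ≤ 0) := by
  obtain ⟨m, hm⟩ := hn
  obtain ⟨u, hu, L, B, hL, hB, hLB⟩ := exists_half_mem_overlapCards_inner (hcard.trans hm)
  obtain ⟨a, hLa, haL⟩ := hL.exists_threshold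
  obtain ⟨b, hBb, hbB⟩ := hB.exists_threshold
  obtain ⟨hLS, hLm, -⟩ := hL
  obtain ⟨hBS, hBm, -⟩ := hB
  have hlow := card_sdiff_union_eq_card_inter hLS hBS (by lia)
  have hleft := Finset.card_sdiff_add_card_inter L B
  have hright := Finset.card_sdiff_add_card_inter B L
  rw [Finset.inter_comm] at hright
  refine ⟨a • u + b • rot90 u, u, hu, S \ (L ∪ B), L \ B, L ∩ B, B \ L, ?_⟩
  simp only [inner_sub_smul_add_smul_rot90_left hu, inner_sub_smul_add_smul_rot90_right hu,
    sub_nonneg, sub_nonpos, Finset.disjoint_left, Set.ext_iff, Set.mem_union, Finset.mem_coe,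
    Finset.mem_sdiff, Finset.mem_union, Finset.mem_inter, not_or]
  refine ⟨?_, ?_, ?_, ?_, ?_, ?_, ?_, by omega, by omega, by omega, by omega,
    fun p ⟨hS, hL, hB⟩ => ⟨haL p hS hL, hbB p hS hB⟩,
    fun p ⟨hL, hB⟩ => ⟨hLa p hL, hbB p (hLS hL) hB⟩,
    fun p ⟨hL, hB⟩ => ⟨hLa p hL, hBb p hB⟩,
    fun p ⟨hB, hL⟩ => ⟨haL p (hBS hB) hL, hBb p hB⟩⟩ <;> grind
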